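/- Let k ≥ 3, let n ∈ I_k, and let Z(n) denote the number of zeros in any optimal (minimal-weight) k-bit BSD representation of n. Then for 0 ≤ v < |I_{k-2}|: Z(a_k + v) = Z(a_{k-2} + v) + 1 and Z(c_k + v) = Z(2^{k-2} - (a_{k-2} + v)) + 1, where a_k = min I_k and c_k = 2^{k-1} + a_{k-2}. -/

import Mathlib

open Polynomial in
/-- The Stern polynomial: `B 0 = 0`, `B 1 = 1`, `B (2n) = t * B n`, `B (2n+1) = B n + B (n+1)`. -/
noncomputable def sternP : ℕ → Polynomial ℕ
  | 0 => 0
  | 1 => 1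
  | n + 2 =>
    if (n + 2) % 2 = 0 then X * sternP (n / 2 + 1)
    else sternP (n / 2 + 1) + sternP (n / 2 + 2)
decreasing_by all_goals omega

/-- The digits of a BSD representation lie in {-1, 0, 1}. -/
def IsBSDDigits {i : ℕ} (b : Fin i → ℤ) : Prop := ∀ j, b j ∈ ({-1, 0, 1} : Set ℤ)

/-- The value represented by the digit string `b` (least significant digit `b 0`). -/
def bsdVal {i : ℕ} (b : Fin i → ℤ) : ℤ := ∑ j : Fin i, b j * 2 ^ (j : ℕ)

/-- `b` is a (not necessarily reduced) non-adjacent form digit string of length `k`: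
digits in {-1,0,1}, no two adjacent digits both nonzero, and nonzero leading digit
(when `k > 0`). -/
def IsReducedNAF {k : ℕ} (b : Fin k → ℤ) : Prop :=
  IsBSDDigits b ∧
  (∀ j : Fin k, ∀ h : (j : ℕ) + 1 < k, b j = 0 ∨ b ⟨(j : ℕ) + 1, h⟩ = 0) ∧
  (∀ h : 0 < k, b ⟨k - 1, Nat.sub_lt h one_pos⟩ ≠ 0)

/-- `m` has a reduced NAF representation of bitlength `k`. -/
def HasNAFLen (m : ℤ) (k : ℕ) : Prop :=
  ∃ b : Fin k → ℤ, IsReducedNAF b ∧ bsdVal b = m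

/-- `I k`: the set of positive integers of NAF-bitlength `k`. -/
def NAFInterval (k : ℕ) : Set ℕ := {n : ℕ | HasNAFLen (n : ℤ) k}

/-- `a k = min I k`: `a 1 = 1`, `a 2 = 2`, `a k = 2^(k-2) + a (k-2)`. -/
def aseq : ℕ → ℕ
  | 0 => 0
  | 1 => 1
  | 2 => 2
  | k + 3 => 2 ^ (k + 1) + aseq (k + 1)

/-- The NAF-bitlength of `n`. -/
noncomputable def nafLen (n : ℕ) : ℕ := sInf {k : ℕ | HasNAFLen (n : ℤ) k}

/-- The minimal Hamming weight of a BSD representation of `n` of length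
equal to its NAF-bitlength. -/
noncomputable def minWeight (n : ℕ) : ℕ :=
  sInf {w : ℕ | ∃ b : Fin (nafLen n) → ℤ,
    IsBSDDigits b ∧ bsdVal b = (n : ℤ) ∧ {j | b j ≠ 0}.ncard = w}

/-- `Z n`: the number of zeros in an optimal (minimal-weight) BSD representation of `n`
of length equal to its NAF-bitlength. -/
noncomputable def Zfun (n : ℕ) : ℕ := nafLen n - minWeight n

/-- `M n`: the number of optimal (minimal-weight) BSD representations of `n`
of length equal to its NAF-bitlength. -/
noncomputable def Mfun (n : ℕ) : ℕ :=
  {b : Fin (nafLen n) → ℤ |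
    IsBSDDigits b ∧ bsdVal b = (n : ℤ) ∧ {j | b j ≠ 0}.ncard = minWeight n}.ncard

/-- The least significant NAF digit. -/
def nafd (n : ℤ) : ℤ := if n % 2 = 0 then 0 else if n % 4 = 1 then 1 else -1

/-- The NAF weight. -/
def nw (n : ℤ) : ℕ :=
  if n = 0 then 0 else (if n % 2 = 0 then 0 else 1) + nw ((n - nafd n) / 2)
termination_by n.natAbs
decreasing_by
  unfold nafd
  split_ifs <;> omega

lemma nw_zero : nw 0 = 0 := by rw [nw]; simp

lemma nw_even (n : ℤ) : nw (2 * n) = nw n := by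
  by_cases h : n = 0
  · subst h; simp
  · rw [nw, if_neg (by omega), if_pos (by omega), nafd, if_pos (by omega)]
    rw [show (2 * n - 0) / 2 = n by omega]; omega

lemma nw_one (n : ℤ) : nw (4 * n + 1) = 1 + nw n := by
  rw [nw, if_neg (by omega), if_neg (by omega), nafd, if_neg (by omega), if_pos (by omega)]
  rw [show (4 * n + 1 - 1) / 2 = 2 * n by omega, nw_even]

lemma nw_neg_one (n : ℤ) : nw (4 * n - 1) = 1 + nw n := by
  rw [nw, if_neg (by omega), if_neg (by omega), nafd, if_neg (by omega), if_neg (by omega)]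
  rw [show (4 * n - 1 - -1) / 2 = 2 * n by omega, nw_even]

lemma mod_cases (n : ℤ) : (∃ q, n = 2 * q) ∨ (∃ q, n = 4 * q + 1) ∨ (∃ q, n = 4 * q - 1) := by
  have h : n % 4 = 0 ∨ n % 4 = 1 ∨ n % 4 = 2 ∨ n % 4 = 3 := by omega
  rcases h with h | h | h | h
  · exact Or.inl ⟨n / 2, by omega⟩
  · exact Or.inr (Or.inl ⟨n / 4, by omega⟩)
  · exact Or.inl ⟨n / 2, by omega⟩
  · exact Or.inr (Or.inr ⟨n / 4 + 1, by omega⟩)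

lemma nw_neg (n : ℤ) : nw (-n) = nw n := by
  induction h : n.natAbs using Nat.strong_induction_on generalizing n with
  | _ N ih =>
    by_cases h0 : n = 0
    · subst h0; simp
    rcases mod_cases n with ⟨q, rfl⟩ | ⟨q, rfl⟩ | ⟨q, rfl⟩
    · rw [show -(2 * q) = 2 * (-q) by ring, nw_even, nw_even]
      exact ih q.natAbs (by omega) q rfl
    · rw [show -(4 * q + 1) = 4 * (-q) - 1 by ring, nw_neg_one, nw_one,
        ih q.natAbs (by omega) q rfl]
    · rw [show -(4 * q - 1) = 4 * (-q) + 1 by ring, nw_neg_one, nw_one,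
        ih q.natAbs (by omega) q rfl]

lemma nw_lip (n : ℤ) : nw n ≤ nw (n + 1) + 1 ∧ nw (n + 1) ≤ nw n + 1 := by
  induction h : n.natAbs + (n + 1).natAbs using Nat.strong_induction_on generalizing n with
  | _ N ih =>
    by_cases h0 : n = 0
    · subst h0; have := nw_one 0; simp [nw_zero] at this ⊢; omega
    by_cases h1 : n = -1
    · subst h1; have := nw_neg_one 0; simp [nw_zero] at this ⊢; omega
    rcases mod_cases n with ⟨q, rfl⟩ | ⟨q, rfl⟩ | ⟨q, rfl⟩
    · rcases mod_cases (2 * q + 1) with ⟨p, hp⟩ | ⟨p, hp⟩ | ⟨p, hp⟩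
      · omega
      · have : q = 2 * p := by omega
        subst this
        rw [hp, nw_even, nw_even, nw_one]; omega
      · have : q = 2 * (p - 1) + 1 := by omega
        rw [hp, nw_even, nw_neg_one]
        rcases mod_cases q with ⟨s, hs⟩ | ⟨s, hs⟩ | ⟨s, hs⟩
        · omega
        · have := ih _ (by omega) (p - 1) rfl
          have e : p - 1 = 2 * s := by omega
          have e2 : nw (p - 1) = nw s := by rw [e, nw_even]
          rw [hs, nw_one]
          rw [sub_add_cancel] at this
          omega
        · have e : p = 2 * s := by omega
          have e2 : nw p = nw s := by rw [e, nw_even]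
          rw [hs, nw_neg_one]
          omega
    · rw [show 4 * q + 1 + 1 = 2 * (2 * q + 1) by ring, nw_one, nw_even]
      rcases mod_cases (2 * q + 1) with ⟨p, hp⟩ | ⟨p, hp⟩ | ⟨p, hp⟩
      · omega
      · have e : q = 2 * p := by omega
        rw [hp, nw_one, e, nw_even]; omega
      · have := ih _ (by omega) q rfl
        have e : q + 1 = 2 * p := by omega
        rw [e, nw_even] at this
        rw [hp, nw_neg_one]; omega
    · rw [show 4 * q - 1 + 1 = 2 * (2 * q) by ring, nw_neg_one, nw_even, nw_even]; omega

lemma nw_pow_add (i : ℕ) (r : ℤ) (h : 3 * |r| < 2 ^ i) : nw (2 ^ i + r) = 1 + nw r := by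
  induction i generalizing r with
  | zero =>
    have : r = 0 := by rw [pow_zero] at h; simp only [Int.abs_eq_natAbs] at *; omega
    subst this; have := nw_one 0; simpa [nw_zero] using this
  | succ i ih =>
    rcases mod_cases r with ⟨q, rfl⟩ | ⟨q, rfl⟩ | ⟨q, rfl⟩
    · rw [pow_succ] at *
      rw [show (2:ℤ) ^ i * 2 + 2 * q = 2 * (2 ^ i + q) by ring, nw_even, nw_even]
      apply ih; clear ih; simp only [Int.abs_eq_natAbs] at *; omega
    all_goals
      rcases i with _ | i
      · exfalso; norm_num at h; simp only [Int.abs_eq_natAbs] at *; omega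
      have h4 : ∃ t : ℤ, (2:ℤ) ^ i = t := ⟨_, rfl⟩
      have h3 : ¬ (3:ℤ) ∣ 2 ^ i := by
        intro h
        have := Int.prime_three.dvd_of_dvd_pow h
        omega
      obtain ⟨t, ht⟩ := h4
      have hh : (2:ℤ) ^ (i + 1 + 1) = 4 * t := by rw [← ht]; ring
      have hh' : (2:ℤ) ^ (i + 1) = 2 * t := by rw [← ht]; ring
      rw [hh] at h ⊢
      have := ih (2 * q) (by rw [hh']; clear ih; rw [ht] at h3; simp only [Int.abs_eq_natAbs] at *; omega)
      rw [hh', ← mul_add, nw_even, nw_even] at this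
    · rw [show 4 * t + (4 * q + 1) = 4 * (t + q) + 1 by ring, nw_one, nw_one, this]
    · rw [show 4 * t + (4 * q - 1) = 4 * (t + q) - 1 by ring, nw_neg_one, nw_neg_one, this]

/-- Hamming weight as a sum. -/
def wt {k : ℕ} (b : Fin k → ℤ) : ℕ := ∑ j, if b j = 0 then 0 else 1

lemma ncard_eq_wt {k : ℕ} (b : Fin k → ℤ) : {j | b j ≠ 0}.ncard = wt b := by
  classical
  rw [Set.ncard_eq_toFinset_card', wt, ← Finset.sum_filter_add_sum_filter_not Finset.univ (fun j => b j = 0)]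
  rw [Finset.sum_congr rfl (g := fun _ => 0), Finset.sum_congr rfl (g := fun _ => 1)
    (s₁ := Finset.univ.filter (fun j => ¬ b j = 0))]
  · simp
  · intro x hx; simp at hx; simp [hx]
  · intro x hx; simp at hx; simp [hx]

lemma wt_le {k : ℕ} (b : Fin k → ℤ) : wt b ≤ k := by
  unfold wt
  calc _ ≤ ∑ j : Fin k, 1 := Finset.sum_le_sum (fun j _ => by split_ifs <;> omega)
    _ = k := by simp

lemma wt_cons {k : ℕ} (d : ℤ) (b : Fin k → ℤ) :
    wt (Fin.cons d b : Fin (k+1) → ℤ) = (if d = 0 then 0 else 1) + wt b := by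
  simp [wt, Fin.sum_univ_succ]

lemma val_cons {k : ℕ} (d : ℤ) (b : Fin k → ℤ) :
    bsdVal (Fin.cons d b : Fin (k+1) → ℤ) = d + 2 * bsdVal b := by
  simp only [bsdVal, Fin.sum_univ_succ, Fin.cons_zero, Fin.cons_succ, Finset.mul_sum]
  simp only [Fin.val_zero, pow_zero, mul_one, Fin.val_succ]
  congr 1
  apply Finset.sum_congr rfl
  intros; ring

lemma bsd_cons {k : ℕ} (d : ℤ) (b : Fin k → ℤ) :
    IsBSDDigits (Fin.cons d b : Fin (k+1) → ℤ) ↔ (d = -1 ∨ d = 0 ∨ d = 1) ∧ IsBSDDigits b := by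
  simp [IsBSDDigits, Fin.forall_fin_succ]

lemma naf_cons {k : ℕ} (d : ℤ) (b : Fin (k+1) → ℤ) :
    IsReducedNAF (Fin.cons d b : Fin (k+2) → ℤ) ↔
      (d = -1 ∨ d = 0 ∨ d = 1) ∧ (d = 0 ∨ b 0 = 0) ∧ IsReducedNAF b := by
  unfold IsReducedNAF
  rw [bsd_cons, Fin.forall_fin_succ]
  have e1 : (∀ h : ((0 : Fin (k+2)) : ℕ) + 1 < k + 2,
      (Fin.cons d b : Fin (k+2) → ℤ) 0 = 0 ∨
        (Fin.cons d b : Fin (k+2) → ℤ) ⟨((0 : Fin (k+2)) : ℕ) + 1, h⟩ = 0) ↔ (d = 0 ∨ b 0 = 0) := by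
    constructor
    · intro h; exact h (by simp)
    · intro h _; exact h
  have e2 : (∀ i : Fin (k+1), ∀ h : ((i.succ : Fin (k+2)) : ℕ) + 1 < k + 2,
      (Fin.cons d b : Fin (k+2) → ℤ) i.succ = 0 ∨
        (Fin.cons d b : Fin (k+2) → ℤ) ⟨(i.succ : ℕ) + 1, h⟩ = 0) ↔
      (∀ j : Fin (k+1), ∀ h : (j : ℕ) + 1 < k + 1, b j = 0 ∨ b ⟨(j : ℕ) + 1, h⟩ = 0) := by
    constructor
    · intro h j hj; exact h j (by simpa using hj)
    · intro h j hj; exact h j (by simpa using hj)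
  have e3 : (∀ h : 0 < k + 2, (Fin.cons d b : Fin (k+2) → ℤ) ⟨k + 2 - 1, Nat.sub_lt h one_pos⟩ ≠ 0)
      ↔ (∀ h : 0 < k + 1, b ⟨k + 1 - 1, Nat.sub_lt h one_pos⟩ ≠ 0) := by
    constructor
    · intro h _; exact h (by omega)
    · intro h _; exact h (by omega)
  rw [e1, e2, e3]
  tauto

lemma naf_one (d : ℤ) (b : Fin 0 → ℤ) :
    IsReducedNAF (Fin.cons d b : Fin 1 → ℤ) ↔ (d = -1 ∨ d = 1) := by
  unfold IsReducedNAF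
  rw [bsd_cons]
  constructor
  · rintro ⟨⟨h, _⟩, _, h2⟩
    have : d ≠ 0 := by simpa using h2 (by omega)
    tauto
  · intro h
    refine ⟨⟨by tauto, fun j => j.elim0⟩, fun j hj => by omega, fun _ => ?_⟩
    change d ≠ 0
    omega

lemma val_zero_len (b : Fin 0 → ℤ) : bsdVal b = 0 := by simp [bsdVal]

lemma wt_zero_len (b : Fin 0 → ℤ) : wt b = 0 := by simp [wt]

lemma first_zero {k : ℕ} (b : Fin (k+1) → ℤ) (h : IsBSDDigits b) :
    b 0 = 0 ↔ ∃ q, bsdVal b = 2 * q := by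
  rw [← Fin.cons_self_tail b] at h ⊢
  rw [bsd_cons] at h
  rw [val_cons, Fin.cons_zero]
  constructor
  · intro h0; exact ⟨bsdVal (Fin.tail b), by omega⟩
  · rintro ⟨q, hq⟩; omega

lemma nw_le_wt {k : ℕ} (b : Fin k → ℤ) (h : IsBSDDigits b) : nw (bsdVal b) ≤ wt b := by
  induction k with
  | zero => simp [val_zero_len, nw_zero]
  | succ k ih =>
    rw [← Fin.cons_self_tail b] at h ⊢
    rw [bsd_cons] at h
    rw [val_cons, wt_cons]
    obtain ⟨hd, ht⟩ := h
    have := ih _ ht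
    generalize bsdVal (Fin.tail b) = V at *
    have e := nw_even V
    rcases hd with hd | hd | hd <;> rw [hd]
    · have := (nw_lip (2 * V - 1)).1
      rw [sub_add_cancel] at this
      rw [show -1 + 2 * V = 2 * V - 1 by ring, if_neg (by omega)]
      omega
    · simp only [zero_add, if_true]; omega
    · have := (nw_lip (2 * V)).2
      rw [add_comm 1 (2 * V), if_neg (by omega)]
      omega

lemma nw_eq_wt {k : ℕ} (b : Fin (k+1) → ℤ) (h : IsReducedNAF b) : nw (bsdVal b) = wt b := by
  induction k with
  | zero =>
    rw [← Fin.cons_self_tail b] at h ⊢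
    rw [naf_one] at h
    rw [val_cons, wt_cons, val_zero_len, wt_zero_len]
    rcases h with h | h <;> rw [h]
    · simpa [nw_zero] using nw_neg_one 0
    · simpa [nw_zero] using nw_one 0
  | succ k ih =>
    rw [← Fin.cons_self_tail b] at h ⊢
    rw [naf_cons] at h
    obtain ⟨hd, hz, ht⟩ := h
    rw [val_cons, wt_cons, ← ih _ ht]
    rw [first_zero _ ht.1] at hz
    generalize bsdVal (Fin.tail b) = V at *
    by_cases h0 : b 0 = 0
    · rw [h0, if_pos rfl, zero_add, zero_add, nw_even]
    · obtain ⟨q, rfl⟩ := hz.resolve_left h0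
      rw [if_neg h0, nw_even]
      rcases hd with hd | hd | hd
      · rw [hd, ← nw_neg_one]; congr 1; ring
      · exact absurd hd h0
      · rw [hd, ← nw_one]; congr 1; ring

lemma naf_bound {k : ℕ} (b : Fin (k+1) → ℤ) (h : IsReducedNAF b) :
    2 ^ (k+1) < 3 * |bsdVal b| ∧ 3 * |bsdVal b| < 2 ^ (k+2) := by
  induction k with
  | zero =>
    rw [← Fin.cons_self_tail b] at h ⊢
    rw [naf_one] at h
    rw [val_cons, val_zero_len]
    rcases h with h | h <;> rw [h] <;> norm_num
  | succ k ih =>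
    rw [← Fin.cons_self_tail b] at h ⊢
    rw [naf_cons] at h
    obtain ⟨hd, hz, ht⟩ := h
    rw [val_cons]
    have := ih _ ht
    rw [first_zero _ ht.1] at hz
    generalize bsdVal (Fin.tail b) = V at *
    simp only [pow_succ] at *
    generalize (2:ℤ) ^ k = t at *
    by_cases h0 : b 0 = 0
    · rw [h0]; clear ih; simp only [Int.abs_eq_natAbs] at *; omega
    · obtain ⟨q, rfl⟩ := hz.resolve_left h0
      clear ih hz ht
      simp only [Int.abs_eq_natAbs] at *
      omega

lemma naf_exists (n : ℤ) (hn : n ≠ 0) :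
    ∃ k, ∃ b : Fin (k+1) → ℤ, IsReducedNAF b ∧ bsdVal b = n := by
  induction h : n.natAbs using Nat.strong_induction_on generalizing n with
  | _ N ih =>
    by_cases h1 : n = 1 ∨ n = -1
    · refine ⟨0, Fin.cons n Fin.elim0, ?_, ?_⟩
      · rw [naf_one]; omega
      · rw [val_cons, val_zero_len]; omega
    rcases mod_cases n with ⟨q, hq⟩ | ⟨q, hq⟩ | ⟨q, hq⟩
    · obtain ⟨k, b, hb, hv⟩ := ih _ (by omega) q (by omega) rfl
      refine ⟨k+1, Fin.cons 0 b, ?_, ?_⟩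
      · rw [naf_cons]; simp [hb]
      · rw [val_cons]; omega
    · obtain ⟨k, b, hb, hv⟩ := ih _ (by omega) (2 * q) (by omega) rfl
      refine ⟨k+1, Fin.cons 1 b, ?_, ?_⟩
      · rw [naf_cons, first_zero _ hb.1]; exact ⟨by omega, Or.inr ⟨q, hv⟩, hb⟩
      · rw [val_cons]; omega
    · obtain ⟨k, b, hb, hv⟩ := ih _ (by omega) (2 * q) (by omega) rfl
      refine ⟨k+1, Fin.cons (-1) b, ?_, ?_⟩
      · rw [naf_cons, first_zero _ hb.1]; exact ⟨by omega, Or.inr ⟨q, hv⟩, hb⟩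
      · rw [val_cons]; omega

lemma exp_unique {k j : ℕ} {x : ℤ} (h1 : 2 ^ k < x) (h2 : x < 2 ^ (k+1))
    (h3 : 2 ^ j < x) (h4 : x < 2 ^ (j+1)) : k = j := by
  have a : k < j + 1 := (pow_lt_pow_iff_right₀ (by norm_num : (1:ℤ) < 2)).1 (h1.trans h4)
  have b : j < k + 1 := (pow_lt_pow_iff_right₀ (by norm_num : (1:ℤ) < 2)).1 (h3.trans h2)
  omega

lemma hasNAFLen_iff (n : ℕ) (k : ℕ) :
    HasNAFLen (n : ℤ) (k+1) ↔ 2 ^ (k+1) < 3 * (n:ℤ) ∧ 3 * (n:ℤ) < 2 ^ (k+2) := by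
  constructor
  · rintro ⟨b, hb, hv⟩
    have := naf_bound b hb
    rw [hv] at this
    simpa using this
  · intro h
    have hp : (0:ℤ) < 2 ^ (k+1) := by positivity
    obtain ⟨j, b, hb, hv⟩ := naf_exists (n:ℤ) (by omega)
    have h' := naf_bound b hb
    rw [hv, Nat.abs_cast] at h'
    have : k + 1 = j + 1 := exp_unique h.1 h.2 h'.1 h'.2
    obtain rfl : k = j := by omega
    exact ⟨b, hb, hv⟩

lemma nafLen_eq (n k : ℕ) (h1 : 2 ^ (k+1) < 3 * (n:ℤ)) (h2 : 3 * (n:ℤ) < 2 ^ (k+2)) :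
    nafLen n = k + 1 := by
  have : {k : ℕ | HasNAFLen (n : ℤ) k} = {k + 1} := by
    ext j
    simp only [Set.mem_ofPred_eq, Set.mem_singleton_iff]
    constructor
    · intro h
      rcases j with _ | j
      · obtain ⟨b, _, hv⟩ := h
        rw [val_zero_len] at hv
        have hp : (0:ℤ) < 2 ^ (k+1) := by positivity
        omega
      · rw [hasNAFLen_iff] at h
        exact exp_unique h.1 h.2 h1 h2
    · rintro rfl
      exact (hasNAFLen_iff n k).2 ⟨h1, h2⟩
  rw [nafLen, this, csInf_singleton]

lemma Zfun_eq (n k : ℕ) (h1 : 2 ^ (k+1) < 3 * (n:ℤ)) (h2 : 3 * (n:ℤ) < 2 ^ (k+2)) :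
    Zfun n = k + 1 - nw n ∧ nw n ≤ k + 1 := by
  obtain ⟨b, hb, hv⟩ := (hasNAFLen_iff n k).2 ⟨h1, h2⟩
  have hw := nw_eq_wt b hb
  rw [hv] at hw
  have hm : minWeight n = nw n := by
    unfold minWeight
    rw [nafLen_eq n k h1 h2]
    apply IsLeast.csInf_eq
    constructor
    · exact ⟨b, hb.1, hv, by rw [ncard_eq_wt, hw]⟩
    · rintro w ⟨c, hc, hcv, rfl⟩
      rw [ncard_eq_wt, ← hcv]
      exact nw_le_wt c hc
  refine ⟨by rw [Zfun, hm, nafLen_eq n k h1 h2], ?_⟩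
  rw [hw]; exact wt_le b

lemma aseq_bound (k : ℕ) : (3 * aseq (k+1) = 2 ^ (k+1) + 1 ∨ 3 * aseq (k+1) = 2 ^ (k+1) + 2) := by
  induction k using Nat.strong_induction_on with
  | _ k ih =>
    match k with
    | 0 => simp [aseq]
    | 1 => simp [aseq]
    | k + 2 =>
      have := ih k (by omega)
      rw [aseq]
      simp only [pow_succ] at *
      omega

lemma interval_card (k : ℕ) : (NAFInterval (k+1)).ncard = 2 ^ (k+1) + 1 - 2 * aseq (k+1) := by
  have : NAFInterval (k+1) = ↑(Finset.Icc (aseq (k+1)) (2 ^ (k+1) - aseq (k+1))) := by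
    ext n
    simp only [NAFInterval, Set.mem_ofPred_eq, hasNAFLen_iff, Finset.coe_Icc, Set.mem_Icc]
    have := aseq_bound k
    rw [pow_succ 2 (k+1)]
    have e : (2:ℤ) ^ (k+1) = ((2 ^ (k+1) : ℕ) : ℤ) := by push_cast; rfl
    rw [e]
    have hp : 0 < 2 ^ (k+1) := by positivity
    generalize 2 ^ (k+1) = t at *
    omega
  rw [this, Set.ncard_coe_finset, Nat.card_Icc]
  have := aseq_bound k
  have hp : 0 < 2 ^ (k+1) := by positivity
  omega

theorem zeros_opt_recursion (k v : ℕ) (hk : 3 ≤ k)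
    (hv : v < (NAFInterval (k - 2)).ncard) :
    Zfun (aseq k + v) = Zfun (aseq (k - 2) + v) + 1 ∧
    Zfun (2 ^ (k - 1) + aseq (k - 2) + v)
      = Zfun (2 ^ (k - 2) - (aseq (k - 2) + v)) + 1 := by
  obtain ⟨j, rfl⟩ : ∃ j, k = j + 3 := ⟨k - 3, by omega⟩
  rw [show j + 3 - 2 = j + 1 by omega] at *
  rw [show j + 3 - 1 = j + 2 by omega, aseq]
  rw [interval_card] at hv
  have ha := aseq_bound j
  generalize hm : aseq (j+1) + v = m
  obtain ⟨t, ht⟩ : ∃ t : ℕ, 2 ^ j = t := ⟨_, rfl⟩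
  have hp : 0 < t := by rw [← ht]; positivity
  have ej : 2 ^ (j+1) = 2 * t := by rw [← ht]; ring
  have ej2 : 2 ^ (j+2) = 4 * t := by rw [← ht]; ring
  have e0 : (2:ℤ) ^ j = t := by rw [← ht]; push_cast; rfl
  have e : (2:ℤ) ^ (j+1) = 2 * t := by rw [← e0]; ring
  have e2 : (2:ℤ) ^ (j+2) = 4 * t := by rw [← e0]; ring
  have e3 : (2:ℤ) ^ (j+3) = 8 * t := by rw [← e0]; ring
  have e4 : (2:ℤ) ^ (j+4) = 16 * t := by rw [← e0]; ring
  have p1 := nw_pow_add j (m - 2 ^ j)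
  have p2 := nw_pow_add j (2 ^ j - m)
  have p3 := nw_pow_add (j+2) (m - 2 * 2 ^ j)
  have p4 := nw_pow_add (j+2) m
  have n1 := nw_neg (m - 2 ^ j)
  have n2 := nw_neg (m - 2 * 2 ^ j)
  rw [add_assoc, add_assoc, hm]
  have z1 := Zfun_eq m j
  have z2 := Zfun_eq (2 ^ (j+1) - m) j
  have z3 := Zfun_eq (2 ^ (j+1) + m) (j+2)
  have z4 := Zfun_eq (2 ^ (j+2) + m) (j+2)
  rw [show j + 2 + 1 = j + 3 by omega, show j + 2 + 2 = j + 4 by omega] at z3 z4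
  rw [ej] at hv ha z2 z3 ⊢
  rw [ej2] at z4 ⊢
  rw [e4, e3] at z3 z4
  rw [e2] at z1 z2 p3 p4
  rw [e] at z1 z2
  rw [e0] at p1 p2 p3 n1 n2
  clear e e0 e2 e3 e4 ej ej2 ht
  have c1 : ((2 * t - m : ℕ) : ℤ) = 2 * (t:ℤ) - m := by clear * - hv ha hm hp; omega
  rw [c1] at z2
  push_cast at z1 z2 z3 z4
  have q1 := p1 (by clear * - hv ha hm hp; rw [Int.abs_eq_natAbs]; omega)
  have q2 := p2 (by clear * - hv ha hm hp; rw [Int.abs_eq_natAbs]; omega)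
  have q3 := p3 (by clear * - hv ha hm hp; rw [Int.abs_eq_natAbs]; omega)
  have q4 := p4 (by clear * - hv ha hm hp; rw [Int.abs_eq_natAbs]; omega)
  have w1 := z1 (by clear * - hv ha hm hp; omega) (by clear * - hv ha hm hp; omega)
  have w2 := z2 (by clear * - hv ha hm hp; omega) (by clear * - hv ha hm hp; omega)
  have w3 := z3 (by clear * - hv ha hm hp; omega) (by clear * - hv ha hm hp; omega)
  have w4 := z4 (by clear * - hv ha hm hp; omega) (by clear * - hv ha hm hp; omega)
  rw [show (t:ℤ) + (m - t) = m by ring] at q1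
  rw [show (t:ℤ) + (t - m) = 2 * t - m by ring] at q2
  rw [show 4 * (t:ℤ) + (m - 2 * t) = 2 * t + m by ring] at q3
  rw [neg_sub] at n1 n2
  clear p1 p2 p3 p4 z1 z2 z3 z4
  omega
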